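/- Let k ≥ 1, let g(k) = (k+1)(⌊k/2⌋+1) − 1, let D be a finite digraph, let T be a (g(k)−1, g(k)−1)-linked set in D with |T| = 2g(k)−1, let B_T be the T-bramble, and let P be a directed path in D whose vertex set is a hitting set of B_T. If S_i is an (i)-split of P with 1 ≤ i ≤ k, then the set A = {a_1, …, a_i} of its split vertices is well-linked in D. -/

import Mathlib

/-- A digraph on vertex type `V`, given by its adjacency relation
(loops are allowed; parallel edges are irrelevant here). -/
structure Dgraph (V : Type) where
  Adj : V → V → Prop

namespace Dgraph

variable {V : Type}

/-- There is a directed walk from `u` to `v` in `D` using only vertices of `S`. -/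
def ReachIn (D : Dgraph V) (S : Set V) (u v : V) : Prop :=
  u ∈ S ∧ v ∈ S ∧ Relation.ReflTransGen (fun a b => a ∈ S ∧ b ∈ S ∧ D.Adj a b) u v

/-- The subdigraph of `D` induced on `S` is strongly connected. -/
def StronglyConnectedOn (D : Dgraph V) (S : Set V) : Prop :=
  ∀ u ∈ S, ∀ v ∈ S, D.ReachIn S u v

/-- `C` is the vertex set of a strong component of the subdigraph of `D` induced on `A`,
i.e. a maximal subset of `A` inducing a strongly connected subdigraph. -/
def IsStrongComponentOn (D : Dgraph V) (A C : Set V) : Prop :=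
  C ⊆ A ∧ D.StronglyConnectedOn C ∧
    ∀ C' : Set V, C ⊆ C' → C' ⊆ A → D.StronglyConnectedOn C' → C' = C

/-- `Z` is a `(T, r)`-balanced separator of `D`: every strong component of `D \ Z`
contains at most `r` vertices of `T`. -/
def IsBalancedSeparator (D : Dgraph V) (T : Set V) (r : ℕ) (Z : Set V) : Prop :=
  ∀ C : Set V, D.IsStrongComponentOn Zᶜ C → (C ∩ T).ncard ≤ r

/-- `T` is `(k, r)`-linked in `D`: every `(T, r)`-balanced separator has size at least `k + 1`. -/
def IsLinked (D : Dgraph V) (T : Set V) (k r : ℕ) : Prop :=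
  ∀ Z : Set V, D.IsBalancedSeparator T r Z → k + 1 ≤ Z.ncard

/-- `β` is a haven of order `k` in `D`: it assigns to every `Z` with `|Z| ≤ k - 1`
the vertex set of a strong component of `D \ Z`, monotonically. -/
def IsHaven (D : Dgraph V) (k : ℕ) (β : Set V → Set V) : Prop :=
  (∀ Z : Set V, Z.ncard < k → D.IsStrongComponentOn Zᶜ (β Z)) ∧
  (∀ Z Z' : Set V, Z.ncard < k → Z' ⊆ Z → β Z ⊆ β Z')

/-- A bramble in `D`: a family of (vertex sets of) strongly connected subdigraphs
any two of which touch. -/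
def IsBramble (D : Dgraph V) (ℬ : Set (Set V)) : Prop :=
  (∀ B ∈ ℬ, D.StronglyConnectedOn B) ∧
  ∀ B ∈ ℬ, ∀ B' ∈ ℬ,
    (B ∩ B').Nonempty ∨
      ((∃ u ∈ B, ∃ v ∈ B', D.Adj u v) ∧ (∃ u ∈ B', ∃ v ∈ B, D.Adj u v))

/-- `C` is a hitting set of the family `ℬ`. -/
def IsHittingSet (ℬ : Set (Set V)) (C : Set V) : Prop :=
  ∀ B ∈ ℬ, (C ∩ B).Nonempty

/-- The order of a bramble: the minimum size of a hitting set. -/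
noncomputable def brambleOrder (ℬ : Set (Set V)) : ℕ :=
  sInf {n : ℕ | ∃ C : Set V, IsHittingSet ℬ C ∧ C.ncard = n}

/-- The `T`-bramble with threshold `g`: all induced strongly connected subdigraphs
containing at least `g` vertices of `T`. -/
def TBramble (D : Dgraph V) (T : Set V) (g : ℕ) : Set (Set V) :=
  {B : Set V | D.StronglyConnectedOn B ∧ g ≤ (B ∩ T).ncard}

/-- The restricted bramble `ℬ(X)`: elements of `ℬ` intersecting `X`. -/
def restrictedBramble (ℬ : Set (Set V)) (X : Set V) : Set (Set V) :=
  {B ∈ ℬ | (B ∩ X).Nonempty}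

/-- The complement bramble `ℬ̄(X)`: elements of `ℬ` disjoint from `X`. -/
def complementBramble (ℬ : Set (Set V)) (X : Set V) : Set (Set V) :=
  {B ∈ ℬ | B ∩ X = ∅}

/-- A directed path in `D`, as a duplicate-free list of consecutively adjacent vertices. -/
def IsPath (D : Dgraph V) (P : List V) : Prop :=
  P.Nodup ∧ P.Chain' D.Adj

/-- A directed path in `D` starting in `A` and ending in `B`. -/
def IsPathFromTo (D : Dgraph V) (P : List V) (A B : Set V) : Prop :=
  D.IsPath P ∧ ∃ h : P ≠ [], P.head h ∈ A ∧ P.getLast h ∈ B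

/-- There are `n` pairwise vertex-disjoint directed paths from `A` to `B` in `D`. -/
def HasDisjointPaths (D : Dgraph V) (A B : Set V) (n : ℕ) : Prop :=
  ∃ Ps : Fin n → List V, (∀ i, D.IsPathFromTo (Ps i) A B) ∧
    ∀ i j, i ≠ j → ∀ v, v ∈ Ps i → v ∉ Ps j

/-- `A` is well-linked in `D`. -/
def WellLinked (D : Dgraph V) (A : Set V) : Prop :=
  ∀ X Y : Set V, X ⊆ A → Y ⊆ A → Disjoint X Y → X.ncard = Y.ncard →
    D.HasDisjointPaths X Y X.ncard

end Dgraph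
/-- `g(k) = (k+1)(⌊k/2⌋+1) - 1`. -/
def gfun (k : ℕ) : ℕ := (k + 1) * (k / 2 + 1) - 1

open Dgraph in
/-- An `(i)`-split of the path `P` (with respect to the `T`-bramble with threshold `g(k)`):
`P` decomposes as `Q 1 ++ [a 1] ++ ⋯ ++ Q i ++ [a i] ++ Pi`, each bramble `ℬ j ⊆ B_T` has
order at least `⌊k/2⌋` and is hit by `V(Q j)`, `X = ⋃ j (V(Q j) ∪ {a j})`, and the
complement bramble `B̄_T(X)` has order at least `g(k) - i(⌊k/2⌋ + 1)`. -/
def IsSplit {V : Type} (D : Dgraph V) (T : Set V) (k : ℕ) (P : List V) (i : ℕ)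
    (Q : Fin i → List V) (Pi : List V) (ℬ : Fin i → Set (Set V))
    (a : Fin i → V) (X : Set V) : Prop :=
  P = (List.ofFn fun j : Fin i => Q j ++ [a j]).flatten ++ Pi ∧
  (∀ j, Q j ≠ []) ∧
  (∀ j, k / 2 ≤ brambleOrder (ℬ j)) ∧
  (∀ j, ℬ j ⊆ D.TBramble T (gfun k)) ∧
  (∀ j, IsHittingSet (ℬ j) {v | v ∈ Q j}) ∧
  X = (⋃ j, ({v | v ∈ Q j} ∪ {a j})) ∧
  gfun k - i * (k / 2 + 1) ≤ brambleOrder (complementBramble (D.TBramble T (gfun k)) X)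

/-!
Before the first split vertex, between any two consecutive ones and after the last one, the path
runs through a segment that hits a subfamily of `B_T` of order at least `⌊k/2⌋`; for the final
segment it is the complement bramble. By Menger's theorem, if well-linkedness fails for `X` and
`Y`, then some `S` with `|S| < |X| = |Y| ≤ ⌊k/2⌋` separates `Y` from `X`. The segments following the
split vertices are pairwise disjoint, so `S` misses one of those that start in `X`; likewise `S`
misses one of the segments that end in `Y`. As `|S|` is smaller than the orders, the first segment
leads to a member of `B_T` avoiding `S`, and the second one leads away from another such member.
Any two members of `B_T` intersect, because `|T| < 2g(k)`, and this yields a walk from `X` to `Y`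
that avoids `S`.

Menger's theorem is proved by adding edges one at a time. If `D` has an `A`-`B` separator `S` with
fewer than `n` vertices while `D + xy` has none, then `S ∪ {x}` and `S ∪ {y}` are minimum
separators of `D + xy`, and linkages in `D` from `A` onto `S ∪ {x}` and from `S ∪ {y}` to `B`
meet only in `S`, so they combine along `S` and the edge `xy`.
-/

namespace Dgraph

open Function

variable {V : Type} {D D' : Dgraph V}

section Reachability

variable {R S S' : Set V} {u v w : V}

theorem ReachIn.mono (h : D.ReachIn S u v) (hS : S ⊆ S')
    (hD : ∀ c ∈ S, ∀ d ∈ S, D.Adj c d → D'.Adj c d) : D'.ReachIn S' u v :=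
  ⟨hS h.1, hS h.2.1, Relation.ReflTransGen.mono
    (fun _ _ hcd => ⟨hS hcd.1, hS hcd.2.1, hD _ hcd.1 _ hcd.2.1 hcd.2.2⟩) _ _ h.2.2⟩

theorem ReachIn.mono_set (h : D.ReachIn S u v) (hS : S ⊆ S') : D.ReachIn S' u v :=
  h.mono hS fun _ _ _ _ hcd => hcd

theorem ReachIn.refl (hu : u ∈ S) : D.ReachIn S u u :=
  ⟨hu, hu, .refl⟩

theorem ReachIn.of_adj (hu : u ∈ S) (hv : v ∈ S) (h : D.Adj u v) : D.ReachIn S u v :=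
  ⟨hu, hv, .single ⟨hu, hv, h⟩⟩

theorem ReachIn.trans (h : D.ReachIn S u v) (h' : D.ReachIn S v w) : D.ReachIn S u w :=
  ⟨h.1, h'.2.1, h.2.2.trans h'.2.2⟩

theorem ReachIn.inter_of_closed (h : D.ReachIn S u v) (hu : u ∈ R)
    (hR : ∀ c ∈ S ∩ R, ∀ d ∈ S, D.Adj c d → d ∈ R) : D.ReachIn (S ∩ R) u v := by
  obtain ⟨huS, -, h⟩ := h
  induction h with
  | refl => exact .refl ⟨huS, hu⟩
  | tail _ hcd ih =>
    have hc := ih.2.1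
    exact ih.trans (.of_adj hc ⟨hcd.2.1, hR _ hc _ hcd.2.1 hcd.2.2⟩ hcd.2.2)

theorem ReachIn.exists_adj_of_notMem (h : D.ReachIn S u v) (hu : u ∈ R) (hv : v ∉ R) :
    ∃ c ∈ S ∩ R, ∃ d ∈ S \ R, D.Adj c d := by
  by_contra! hclosed
  exact hv (h.inter_of_closed hu fun c hc d hd hcd =>
    by_contra fun hdR => hclosed c hc d ⟨hd, hdR⟩ hcd).2.1.2

theorem ReachIn.reachable_set (h : D.ReachIn S u v) : D.ReachIn {w | D.ReachIn S u w} u v :=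
  (h.inter_of_closed (R := {w | D.ReachIn S u w}) (.refl h.1) fun _ hc _ hd hcd =>
    hc.2.trans (.of_adj hc.1 hd hcd)).mono_set Set.inter_subset_right

theorem ReachIn.exists_subset_forall_reachIn_diff (h : D.ReachIn S u v) :
    ∃ W ⊆ S, v ∈ W ∧ ∀ w ∈ W, D.ReachIn (insert w (W \ {v})) u w := by
  set R := {w | D.ReachIn (S \ {v}) u w} with hR
  have hvR : v ∉ R := fun hv => hv.2.1.2 rfl
  have hRS : R ⊆ S := fun w hw => hw.2.1.1
  refine ⟨insert v R, Set.insert_subset h.2.1 hRS, Set.mem_insert v R, ?_⟩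
  rw [Set.insert_sdiff_self_of_notMem hvR]
  rintro w (rfl | hw)
  · by_cases huw : u = w
    · exact huw ▸ .refl (Set.mem_insert u R)
    obtain ⟨c, ⟨-, hc⟩, d, ⟨hd, hdR⟩, hcd⟩ := h.exists_adj_of_notMem (R := R)
      (.refl ⟨h.1, huw⟩) hvR
    obtain rfl : d = w := by
      by_contra hdw
      exact hdR (hc.trans (.of_adj hc.2.1 ⟨hd, hdw⟩ hcd))
    exact (hc.reachable_set.mono_set (Set.subset_insert d R)).trans
      (.of_adj (Set.mem_insert_of_mem d hc) (Set.mem_insert d R) hcd)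
  · exact hw.reachable_set.mono_set (Set.subset_insert w R)

theorem ReachIn.exists_isPathFromTo (h : D.ReachIn S u v) :
    ∃ L : List V, D.IsPathFromTo L {u} {v} ∧ ∀ w ∈ L, w ∈ S := by
  obtain ⟨-, hv, h⟩ := h
  induction h using Relation.ReflTransGen.head_induction_on with
  | refl =>
    exact ⟨[v], ⟨⟨List.nodup_singleton v, List.isChain_singleton v⟩, by simp⟩, by simpa using hv⟩
  | @head c d hcd _ ih =>
    obtain ⟨L, ⟨⟨hnodup, hchain⟩, hL, hhead, hlast⟩, hLS⟩ := ih
    by_cases hcL : c ∈ L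
    · obtain ⟨s, t, rfl⟩ := List.append_of_mem hcL
      refine ⟨c :: t, ⟨⟨hnodup.of_append_right, hchain.right_of_append⟩, by simp, rfl, ?_⟩,
        fun w hw => hLS w (List.mem_append_right s hw)⟩
      rwa [List.getLast_append_of_ne_nil _ (by simp)] at hlast
    · obtain ⟨e, t, rfl⟩ := List.exists_cons_of_ne_nil hL
      obtain rfl : e = d := hhead
      refine ⟨c :: e :: t, ⟨⟨List.nodup_cons.2 ⟨hcL, hnodup⟩,
        List.isChain_cons_cons.2 ⟨hcd.2.2, hchain⟩⟩, by simp, rfl, ?_⟩,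
        List.forall_mem_cons.2 ⟨hcd.1, hLS⟩⟩
      rwa [List.getLast_cons hL]

theorem reachIn_of_isChain_cons {l : List V} (h : (u :: l).IsChain D.Adj) (hv : v ∈ u :: l) :
    D.ReachIn {w | w ∈ u :: l} u v := by
  induction l generalizing u with
  | nil => exact List.mem_singleton.1 hv ▸ .refl (List.mem_singleton_self v)
  | cons c t ih =>
    obtain ⟨huc, hchain⟩ := List.isChain_cons_cons.1 h
    rcases List.mem_cons.1 hv with rfl | hv
    · exact .refl List.mem_cons_self
    · exact .trans (.of_adj (by simp) (by simp) huc)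
        ((ih hchain hv).mono_set fun w hw => List.mem_cons_of_mem _ hw)

theorem reachIn_of_isChain_concat {l : List V} (h : (l ++ [v]).IsChain D.Adj) (hu : u ∈ l) :
    D.ReachIn {w | w ∈ l ++ [v]} u v := by
  obtain ⟨s, t, rfl⟩ := List.append_of_mem hu
  rw [List.append_assoc] at h ⊢
  exact (reachIn_of_isChain_cons (l := t ++ [v]) h.right_of_append (by simp)).mono_set
    fun w hw => List.mem_append_right s hw

end Reachability

section Reverse

variable {A B S : Set V} {u v x y : V}

/-- The reverse digraph, used to exchange the roles of sources and targets. -/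
def rev (D : Dgraph V) : Dgraph V := ⟨fun u v => D.Adj v u⟩

/-- The digraph `D + xy` obtained from `D` by adding the edge from `x` to `y`. -/
def addEdge (D : Dgraph V) (x y : V) : Dgraph V := ⟨fun u v => (u = x ∧ v = y) ∨ D.Adj u v⟩

theorem rev_addEdge : (D.addEdge x y).rev = D.rev.addEdge y x := by
  simp only [addEdge, rev, and_comm]

theorem ReachIn.rev (h : D.ReachIn S u v) : D.rev.ReachIn S v u :=
  ⟨h.2.1, h.1, Relation.ReflTransGen.mono (fun _ _ hcd => ⟨hcd.2.1, hcd.1, hcd.2.2⟩) _ _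
    (Relation.ReflTransGen.swap _ _ h.2.2)⟩

theorem ReachIn.addEdge (h : D.ReachIn S u v) : (D.addEdge x y).ReachIn S u v :=
  h.mono subset_rfl fun _ _ _ _ => Or.inr

/-- `S` separates `B` from `A`: every walk from `A` to `B` meets `S`. -/
def IsSeparator (D : Dgraph V) (A B S : Set V) : Prop :=
  ∀ a ∈ A, ∀ b ∈ B, ¬ D.ReachIn Sᶜ a b

theorem IsSeparator.rev (h : D.IsSeparator A B S) : D.rev.IsSeparator B A S :=
  fun b hb a ha hba => h a ha b hb hba.rev

end Reverse

section Separators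

variable {A B P S Z : Set V} {x y : V}

theorem IsSeparator.insert_addEdge (h : D.IsSeparator A B S) :
    (D.addEdge x y).IsSeparator A B (insert x S) := by
  intro a ha b hb hab
  refine h a ha b hb (hab.mono (Set.compl_subset_compl.2 (Set.subset_insert x S)) ?_)
  rintro c hc d - (⟨rfl, -⟩ | hcd)
  · exact absurd (Set.mem_insert c S) hc
  · exact hcd

/-- A walk from `A` that avoids `Z` never reaches `P`, hence never uses the edge `xy`. -/
theorem IsSeparator.addEdge_of_mem (hP : (D.addEdge x y).IsSeparator A B P) (hx : x ∈ P)
    (hZ : D.IsSeparator A P Z) : (D.addEdge x y).IsSeparator A B Z := by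
  intro a ha b hb hab
  have hclosed : ∀ c ∈ Zᶜ ∩ {w | D.ReachIn Zᶜ a w}, ∀ d ∈ Zᶜ, (D.addEdge x y).Adj c d →
      D.ReachIn Zᶜ a d := by
    rintro c ⟨-, hc⟩ d hd (⟨rfl, -⟩ | hcd)
    · exact absurd hc (hZ a ha c hx)
    · exact hc.trans (.of_adj hc.2.1 hd hcd)
  exact hP a ha b hb ((hab.inter_of_closed (.refl hab.1) hclosed).mono_set
    fun w hw hwP => hZ a ha w hwP hw.2)

end Separators

section Linkages

variable {A B P S : Set V} {W : V → Set V} {n : ℕ} {p q v x y : V}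

/-- There are `n` pairwise disjoint vertex sets, each of which carries a walk from `A` to `B`.
This is a form of `HasDisjointPaths` in which walks need not be shortened to paths. -/
def HasLinkage (D : Dgraph V) (A B : Set V) (n : ℕ) : Prop :=
  ∃ W : Fin n → Set V, Pairwise (Disjoint on W) ∧ ∀ i, ∃ a ∈ A, ∃ b ∈ B, D.ReachIn (W i) a b

theorem HasLinkage.hasDisjointPaths (h : D.HasLinkage A B n) : D.HasDisjointPaths A B n := by
  obtain ⟨W, hW, hreach⟩ := h
  choose a ha b hb hab using hreach
  choose L hL hLW using fun i => (hab i).exists_isPathFromTo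
  refine ⟨L, fun i => ?_, fun i j hij v hvi hvj =>
    Set.disjoint_left.1 (hW hij) (hLW i v hvi) (hLW j v hvj)⟩
  obtain ⟨hpath, hne, hhead, hlast⟩ := hL i
  exact ⟨hpath, hne, Set.singleton_subset_iff.2 (ha i) hhead,
    Set.singleton_subset_iff.2 (hb i) hlast⟩

theorem HasLinkage.rev (h : D.HasLinkage A B n) : D.rev.HasLinkage B A n := by
  obtain ⟨W, hW, hreach⟩ := h
  refine ⟨W, hW, fun i => ?_⟩
  obtain ⟨a, ha, b, hb, hab⟩ := hreach i
  exact ⟨b, hb, a, ha, hab.rev⟩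

theorem HasLinkage.of_pairwiseDisjoint {ι : Type*} [Finite ι] {I : Set ι} {W : ι → Set V}
    (hI : n ≤ I.ncard) (hW : I.PairwiseDisjoint W)
    (hreach : ∀ i ∈ I, ∃ a ∈ A, ∃ b ∈ B, D.ReachIn (W i) a b) : D.HasLinkage A B n := by
  have := Fintype.ofFinite I
  obtain ⟨f⟩ : Nonempty (Fin n ↪ I) := Embedding.nonempty_of_card_le <| by
    rwa [Fintype.card_fin, ← Nat.card_eq_fintype_card]
  exact ⟨fun i => W (f i), fun i j hij => hW (f i).2 (f j).2
    fun h => hij (f.injective (Subtype.ext h)), fun i => hreach _ (f i).2⟩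

theorem hasLinkage_of_le_ncard_inter [Finite V] (h : n ≤ (A ∩ B).ncard) : D.HasLinkage A B n :=
  .of_pairwiseDisjoint h (W := fun v => {v}) (fun _ _ _ _ huv => Set.disjoint_singleton.2 huv)
    fun v hv => ⟨v, hv.1, v, hv.2, .refl rfl⟩

/-- A linkage from `A` onto `P`, indexed by the terminals `p ∈ P` and trimmed: every vertex of
`W p` is reachable from `A` inside `W p` without passing through `p` on the way. -/
structure IsFan (D : Dgraph V) (A P : Set V) (W : V → Set V) : Prop where
  pairwiseDisjoint : P.PairwiseDisjoint W
  mem : ∀ p ∈ P, p ∈ W p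
  reach : ∀ p ∈ P, ∀ v ∈ W p, ∃ a ∈ A, D.ReachIn (insert v (W p \ {p})) a v

theorem HasLinkage.exists_isFan [Finite V] (h : D.HasLinkage A P P.ncard) :
    ∃ W, D.IsFan A P W := by
  obtain ⟨L, hL, hreach⟩ := h
  choose a ha e he hae using hreach
  have he_inj : Injective e := fun i j hij => by
    by_contra hne
    exact Set.disjoint_left.1 (hL hne) (hae i).2.1 (hij ▸ (hae j).2.1)
  have he_range : Set.range e = P :=
    Set.eq_of_subset_of_ncard_le (Set.range_subset_iff.2 he)
      (by rw [Set.ncard_range_of_injective he_inj, Nat.card_fin])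
  have htrim : ∀ p ∈ P, ∃ W : Set V, (∃ i, e i = p ∧ W ⊆ L i) ∧ p ∈ W ∧
      ∀ v ∈ W, ∃ a ∈ A, D.ReachIn (insert v (W \ {p})) a v := by
    rintro _ hp
    obtain ⟨i, rfl⟩ := he_range.symm ▸ hp
    obtain ⟨W, hWL, hmem, hW⟩ := (hae i).exists_subset_forall_reachIn_diff
    exact ⟨W, ⟨i, rfl, hWL⟩, hmem, fun v hv => ⟨a i, ha i, hW v hv⟩⟩
  choose! W hWL hmem hW using htrim
  refine ⟨W, fun p hp q hq hpq => ?_, hmem, hW⟩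
  obtain ⟨i, rfl, hi⟩ := hWL p hp
  obtain ⟨j, rfl, hj⟩ := hWL q hq
  exact (hL fun hij => hpq (congrArg e hij)).mono hi hj

theorem IsFan.eq_of_mem (hW : D.IsFan A P W) (hp : p ∈ P) (hq : q ∈ P) (h : q ∈ W p) : q = p :=
  hW.pairwiseDisjoint.elim_set hq hp q (hW.mem q hq) h

theorem IsFan.exists_reachIn_self (hW : D.IsFan A P W) (hp : p ∈ P) :
    ∃ a ∈ A, D.ReachIn (W p) a p := by
  obtain ⟨a, ha, hap⟩ := hW.reach p hp p (hW.mem p hp)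
  exact ⟨a, ha, hap.mono_set (Set.insert_subset (hW.mem p hp) Set.sdiff_subset)⟩

theorem IsFan.exists_reachIn_compl (hW : D.IsFan A P W) (hS : S ⊆ P) (hp : p ∈ P)
    (hv : v ∈ W p) (hvS : v ∉ S) : ∃ a ∈ A, D.ReachIn Sᶜ a v := by
  obtain ⟨a, ha, hav⟩ := hW.reach p hp v hv
  refine ⟨a, ha, hav.mono_set ?_⟩
  rintro w (rfl | ⟨hw, hwp⟩)
  · exact hvS
  · exact fun hwS => hwp (hW.eq_of_mem hp (hS hwS) hw)

theorem IsFan.eq_of_mem_of_mem_rev {Q : Set V} {U : V → Set V} (hS : D.IsSeparator A B S)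
    (hW : D.IsFan A P W) (hU : D.rev.IsFan B Q U) (hSP : S ⊆ P) (hSQ : S ⊆ Q)
    (hp : p ∈ P) (hq : q ∈ Q) (hvp : v ∈ W p) (hvq : v ∈ U q) : p = q ∧ p ∈ S := by
  by_cases hv : v ∈ S
  · obtain rfl := hW.eq_of_mem hp (hSP hv) hvp
    exact ⟨hU.eq_of_mem hq (hSQ hv) hvq, hv⟩
  · obtain ⟨a, ha, hav⟩ := hW.exists_reachIn_compl hSP hp hvp hv
    obtain ⟨b, hb, hbv⟩ := hU.exists_reachIn_compl hSQ hq hvq hv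
    exact absurd (hav.trans hbv.rev) (hS a ha b hb)

theorem swap_mem_insert [DecidableEq V] (hx : x ∉ S) (hy : y ∉ S) (hp : p ∈ insert x S) :
    Equiv.swap x y p ∈ insert y S := by
  rcases hp with rfl | hp
  · exact Or.inl (Equiv.swap_apply_left p y)
  · rw [Equiv.swap_apply_of_ne_of_ne (ne_of_mem_of_not_mem hp hx) (ne_of_mem_of_not_mem hp hy)]
    exact Or.inr hp

theorem IsFan.disjoint_swap [DecidableEq V] {U : V → Set V} (hS : D.IsSeparator A B S)
    (hx : x ∉ S) (hy : y ∉ S) (hW : D.IsFan A (insert x S) W)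
    (hU : D.rev.IsFan B (insert y S) U) (hp : p ∈ insert x S) (hq : q ∈ insert x S)
    (hpq : p ≠ q) : Disjoint (W p) (U (Equiv.swap x y q)) := by
  refine Set.disjoint_left.2 fun v hvp hvq => ?_
  obtain ⟨rfl, hqS⟩ := hW.eq_of_mem_of_mem_rev hS hU (Set.subset_insert x S)
    (Set.subset_insert y S) hp (swap_mem_insert hx hy hq) hvp hvq
  rcases hq with rfl | hq
  · exact hy (Equiv.swap_apply_left q y ▸ hqS)
  · exact hpq (Equiv.swap_apply_of_ne_of_ne (ne_of_mem_of_not_mem hq hx)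
      (ne_of_mem_of_not_mem hq hy))

/-- The fans are glued at the vertices of `S` and along the new edge; `Equiv.swap x y` matches
the terminals of the two fans. -/
theorem IsFan.hasLinkage_addEdge [Finite V] {U : V → Set V} (hS : D.IsSeparator A B S)
    (hx : x ∉ S) (hy : y ∉ S) (hW : D.IsFan A (insert x S) W)
    (hU : D.rev.IsFan B (insert y S) U) :
    (D.addEdge x y).HasLinkage A B (insert x S).ncard := by
  classical
  refine .of_pairwiseDisjoint le_rfl (W := fun p => W p ∪ U (Equiv.swap x y p)) ?_ ?_
  · intro p hp q hq hpq
    have hWW : Disjoint (W p) (W q) := hW.pairwiseDisjoint hp hq hpq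
    have hUU : Disjoint (U (Equiv.swap x y p)) (U (Equiv.swap x y q)) :=
      hU.pairwiseDisjoint (swap_mem_insert hx hy hp) (swap_mem_insert hx hy hq)
        ((Equiv.swap x y).injective.ne hpq)
    exact Set.disjoint_union_left.2
      ⟨Set.disjoint_union_right.2 ⟨hWW, hW.disjoint_swap hS hx hy hU hp hq hpq⟩,
        Set.disjoint_union_right.2 ⟨(hW.disjoint_swap hS hx hy hU hq hp hpq.symm).symm, hUU⟩⟩
  · intro p hp
    set q := Equiv.swap x y p
    obtain ⟨a, ha, hap⟩ := hW.exists_reachIn_self hp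
    obtain ⟨b, hb, hbq⟩ := hU.exists_reachIn_self (swap_mem_insert hx hy hp)
    have hap' : (D.addEdge x y).ReachIn (W p ∪ U q) a p :=
      (hap.mono_set Set.subset_union_left).addEdge
    have hqb : (D.addEdge x y).ReachIn (W p ∪ U q) q b :=
      (hbq.rev.mono_set Set.subset_union_right).addEdge
    refine ⟨a, ha, b, hb, hap'.trans (.trans ?_ hqb)⟩
    rcases hp with rfl | hp
    · exact .of_adj hap'.2.1 hqb.1 (Or.inl ⟨rfl, Equiv.swap_apply_left p y⟩)
    · have hqp : q = p := Equiv.swap_apply_of_ne_of_ne (ne_of_mem_of_not_mem hp hx)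
        (ne_of_mem_of_not_mem hp hy)
      rw [hqp] at hap' ⊢
      exact .refl hap'.2.1

end Linkages

section Menger

variable [Finite V] {A B : Set V} {x y : V} {n : ℕ}

theorem hasLinkage_addEdge_of_forall_isSeparator
    (hD : ∀ A B, (∀ S, D.IsSeparator A B S → n ≤ S.ncard) → D.HasLinkage A B n)
    (h : ∀ S, (D.addEdge x y).IsSeparator A B S → n ≤ S.ncard) :
    (D.addEdge x y).HasLinkage A B n := by
  by_cases hsep : ∀ S, D.IsSeparator A B S → n ≤ S.ncard
  · obtain ⟨W, hW, hreach⟩ := hD A B hsep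
    refine ⟨W, hW, fun i => ?_⟩
    obtain ⟨a, ha, b, hb, hab⟩ := hreach i
    exact ⟨a, ha, b, hb, hab.addEdge⟩
  push Not at hsep
  obtain ⟨S, hS, hSn⟩ := hsep
  have hSx : (D.addEdge x y).IsSeparator A B (insert x S) := hS.insert_addEdge
  have hSy : (D.addEdge x y).rev.IsSeparator B A (insert y S) :=
    rev_addEdge ▸ hS.rev.insert_addEdge
  have hinsert : ∀ z, n ≤ (insert z S).ncard → z ∉ S ∧ (insert z S).ncard = n := by
    intro z hz
    have hzS : z ∉ S := fun hzS => by
      rw [Set.insert_eq_of_mem hzS] at hz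
      exact hSn.not_ge hz
    exact ⟨hzS, le_antisymm (Set.ncard_insert_of_notMem hzS ▸ hSn) hz⟩
  obtain ⟨hxS, hx⟩ := hinsert x (h _ hSx)
  obtain ⟨hyS, hy⟩ := hinsert y (h _ hSy.rev)
  obtain ⟨W, hW⟩ : ∃ W, D.IsFan A (insert x S) W := HasLinkage.exists_isFan <|
    hx.symm ▸ hD _ _ fun Z hZ => h Z (hSx.addEdge_of_mem (Set.mem_insert x S) hZ)
  obtain ⟨U, hU⟩ : ∃ U, D.rev.IsFan B (insert y S) U := by
    refine HasLinkage.exists_isFan (hy.symm ▸ (hD _ _ fun Z hZ => h Z ?_).rev)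
    rw [rev_addEdge] at hSy
    have hZ' := hSy.addEdge_of_mem (Set.mem_insert y S) hZ.rev
    exact (rev_addEdge (D := D) ▸ hZ').rev
  exact hx ▸ hW.hasLinkage_addEdge hS hxS hyS hU

theorem hasLinkage_of_forall_isSeparator (h : ∀ S, D.IsSeparator A B S → n ≤ S.ncard) :
    D.HasLinkage A B n := by
  obtain ⟨Adj⟩ := D
  obtain ⟨E, rfl⟩ : ∃ E : Set (V × V), Adj = fun u v => (u, v) ∈ E := ⟨{e | Adj e.1 e.2}, rfl⟩
  induction E, E.toFinite using Set.Finite.induction_on generalizing A B with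
  | empty =>
    refine hasLinkage_of_le_ncard_inter (h _ fun a ha b hb hab => ?_)
    have hab' := hab.inter_of_closed (R := {a}) rfl fun _ _ _ _ hcd => hcd.elim
    exact hab.2.1 ⟨hab'.2.1.2.symm ▸ ha, hb⟩
  | @insert e E _ _ ih =>
    obtain ⟨x, y⟩ := e
    have hE : (⟨fun u v => (u, v) ∈ insert (x, y) E⟩ : Dgraph V) =
        addEdge ⟨fun u v => (u, v) ∈ E⟩ x y := by
      simp only [addEdge, Set.mem_insert_iff, Prod.mk.injEq]
    rw [hE] at h ⊢
    exact hasLinkage_addEdge_of_forall_isSeparator (fun _ _ => ih) h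

theorem menger (h : ∀ S, D.IsSeparator A B S → n ≤ S.ncard) : D.HasDisjointPaths A B n :=
  (hasLinkage_of_forall_isSeparator h).hasDisjointPaths

end Menger

section Brambles

variable {ι : Type*} {𝒰 ℬ : Set (Set V)} {B B' C E S X Y T : Set V} {u v : V} {r : ℕ}

theorem IsBramble.reachIn (h𝒰 : D.IsBramble 𝒰) (hB : B ∈ 𝒰) (hB' : B' ∈ 𝒰) (hBS : B ⊆ S)
    (hBS' : B' ⊆ S) (hu : u ∈ B) (hv : v ∈ B') : D.ReachIn S u v := by
  rcases h𝒰.2 B hB B' hB' with ⟨w, hw, hw'⟩ | ⟨⟨w, hw, w', hw', hadj⟩, -⟩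
  · exact ((h𝒰.1 B hB u hu w hw).mono_set hBS).trans
      ((h𝒰.1 B' hB' w hw' v hv).mono_set hBS')
  · exact ((h𝒰.1 B hB u hu w hw).mono_set hBS).trans
      (.trans (.of_adj (hBS hw) (hBS' hw') hadj) ((h𝒰.1 B' hB' w' hw' v hv).mono_set hBS'))

theorem isBramble_TBramble {g : ℕ} (hTfin : T.Finite) (hT : T.ncard < 2 * g) :
    D.IsBramble (D.TBramble T g) := by
  refine ⟨fun B hB => hB.1, fun B hB B' hB' => Or.inl ?_⟩
  by_contra hBB'
  have hdisj : Disjoint (B ∩ T) (B' ∩ T) :=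
    (Set.disjoint_iff_inter_eq_empty.2 (Set.not_nonempty_iff_eq_empty.1 hBB')).mono
      Set.inter_subset_left Set.inter_subset_left
  have hcard : (B ∩ T).ncard + (B' ∩ T).ncard ≤ T.ncard := by
    rw [← Set.ncard_union_eq hdisj (hTfin.inter_of_right B) (hTfin.inter_of_right B')]
    exact Set.ncard_le_ncard (Set.union_subset Set.inter_subset_right Set.inter_subset_right) hTfin
  have := hB.2
  have := hB'.2
  omega

theorem complementBramble_subset : complementBramble 𝒰 X ⊆ 𝒰 :=
  Set.sep_subset _ _

theorem IsHittingSet.complementBramble (hC : IsHittingSet 𝒰 C) (hCXY : C ⊆ X ∪ Y) :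
    IsHittingSet (complementBramble 𝒰 X) Y := by
  rintro B ⟨hB, hBX⟩
  obtain ⟨v, hvC, hvB⟩ := hC B hB
  refine ⟨v, (hCXY hvC).resolve_left fun hvX => ?_, hvB⟩
  exact Set.notMem_empty v (hBX ▸ ⟨hvB, hvX⟩)

theorem exists_mem_subset_compl_of_ncard_lt_brambleOrder (h : S.ncard < brambleOrder ℬ) :
    ∃ B ∈ ℬ, B ⊆ Sᶜ := by
  by_contra! hB
  refine h.not_ge (Nat.sInf_le ⟨S, fun B hBℬ => ?_, rfl⟩)
  obtain ⟨v, hvB, hvS⟩ := Set.not_subset.1 (hB B hBℬ)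
  exact ⟨v, not_not.1 hvS, hvB⟩

/-- Inside `E`, the vertex `v` reaches every member of some subfamily of `𝒰` of order at least
`r`, so that fewer than `r` vertices outside `E` cannot cut `v` off from `𝒰`. -/
def ReachesBramble (D : Dgraph V) (𝒰 : Set (Set V)) (r : ℕ) (E : Set V) (v : V) : Prop :=
  ∃ ℬ ⊆ 𝒰, r ≤ brambleOrder ℬ ∧ ∀ B ∈ ℬ, ∃ u ∈ B, D.ReachIn E v u

theorem ReachesBramble.exists_reachIn_compl (h : D.ReachesBramble 𝒰 r E v) (hS : S.ncard < r)
    (hE : Disjoint E S) : ∃ B ∈ 𝒰, B ⊆ Sᶜ ∧ ∃ u ∈ B, D.ReachIn Sᶜ v u := by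
  obtain ⟨ℬ, hℬ, hr, hreach⟩ := h
  obtain ⟨B, hB, hBS⟩ := exists_mem_subset_compl_of_ncard_lt_brambleOrder (hS.trans_le hr)
  obtain ⟨u, hu, hvu⟩ := hreach B hB
  exact ⟨B, hℬ hB, hBS, u, hu, hvu.mono_set hE.subset_compl_right⟩

theorem exists_mem_disjoint_of_ncard_lt [Finite V] {J : Set ι} {F : ι → Set V}
    (hF : Pairwise (Disjoint on F)) (hS : S.ncard < J.ncard) : ∃ j ∈ J, Disjoint (F j) S := by
  by_contra! h
  obtain ⟨j₀, hj₀⟩ : J.Nonempty := Set.nonempty_of_ncard_ne_zero (Nat.ne_zero_of_lt hS)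
  have hmeet : ∀ j ∈ J, ∃ v, v ∈ F j ∧ v ∈ S := fun j hj => Set.not_disjoint_iff.1 (h j hj)
  have : Nonempty V := ⟨(hmeet j₀ hj₀).choose⟩
  choose! f hfF hfS using hmeet
  refine hS.not_ge (Set.ncard_le_ncard_of_injOn f hfS fun i hi j hj hij => ?_)
  by_contra hne
  exact Set.disjoint_left.1 (hF hne) (hfF i hi) (hij ▸ hfF j hj)

theorem IsBramble.wellLinked_range [Finite V] (h𝒰 : D.IsBramble 𝒰) {a : ι → V}
    {E F : ι → Set V} (hι : Nat.card ι ≤ 2 * r + 1) (ha : Injective a)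
    (hE : Pairwise (Disjoint on E)) (hF : Pairwise (Disjoint on F))
    (hout : ∀ j, D.ReachesBramble 𝒰 r (E j) (a j))
    (hin : ∀ j, D.rev.ReachesBramble 𝒰 r (F j) (a j)) : D.WellLinked (Set.range a) := by
  intro X Y hX hY hXY hcard
  refine menger fun S hS => ?_
  by_contra! hlt
  have hSX : S.ncard < (a ⁻¹' X).ncard := by
    rwa [Set.ncard_preimage_of_injective_subset_range ha hX]
  have hSY : S.ncard < (a ⁻¹' Y).ncard := by
    rwa [Set.ncard_preimage_of_injective_subset_range ha hY, ← hcard]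
  have hSr : S.ncard < r := by
    have hXYcard : X.ncard + Y.ncard ≤ Nat.card ι := by
      rw [← Set.ncard_union_eq hXY, ← Set.ncard_range_of_injective ha]
      exact Set.ncard_le_ncard (Set.union_subset hX hY)
    omega
  obtain ⟨i, hi, hiS⟩ := exists_mem_disjoint_of_ncard_lt hE hSX
  obtain ⟨j, hj, hjS⟩ := exists_mem_disjoint_of_ncard_lt hF hSY
  obtain ⟨B, hB, hBS, u, hu, hiu⟩ := (hout i).exists_reachIn_compl hSr hiS
  obtain ⟨B', hB', hBS', u', hu', hju'⟩ := (hin j).exists_reachIn_compl hSr hjS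
  exact hS _ hi _ hj (hiu.trans ((h𝒰.reachIn hB hB' hBS hBS' hu hu').trans hju'.rev))

end Brambles

section AlternatingDecompositions

variable {α : Type*} {n r : ℕ}

theorem flatten_ofFn_castSucc_append_last (Q : Fin (n + 1) → List α) (b : Fin n → List α) :
    (List.ofFn fun j => Q j.castSucc ++ b j).flatten ++ Q (Fin.last n) =
      Q 0 ++ (List.ofFn fun j => b j ++ Q j.succ).flatten := by
  induction n with
  | zero => simp
  | succ n ih =>
    simpa [List.ofFn_succ] using ih (fun j => Q j.succ) fun j => b j.succ

theorem pairwise_disjoint_of_nodup_flatten_ofFn {L : Fin n → List α}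
    (h : (List.ofFn L).flatten.Nodup) : Pairwise (Disjoint on fun j => {v | v ∈ L j}) := by
  have hlt := List.pairwise_ofFn.1 (List.nodup_flatten.1 h).2
  intro i j hij
  refine Set.disjoint_left.2 fun v hvi hvj => ?_
  rcases hij.lt_or_gt with hij | hji
  · exact hlt hij hvi hvj
  · exact hlt hji hvj hvi

theorem IsBramble.wellLinked_range_of_isPath [Finite V] {𝒰 : Set (Set V)}
    (h𝒰 : D.IsBramble 𝒰) {Q : Fin (n + 1) → List V} {a : Fin n → V}
    {ℬ : Fin (n + 1) → Set (Set V)} (hn : n ≤ 2 * r + 1)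
    (hP : D.IsPath ((List.ofFn fun j => Q j.castSucc ++ [a j]).flatten ++ Q (Fin.last n)))
    (hℬ : ∀ j, ℬ j ⊆ 𝒰) (hord : ∀ j, r ≤ brambleOrder (ℬ j))
    (hhit : ∀ j, IsHittingSet (ℬ j) {v | v ∈ Q j}) : D.WellLinked (Set.range a) := by
  have hP' := hP
  rw [flatten_ofFn_castSucc_append_last] at hP'
  have hF := pairwise_disjoint_of_nodup_flatten_ofFn hP.1.of_append_left
  have hE := pairwise_disjoint_of_nodup_flatten_ofFn hP'.1.of_append_right
  have hin_chain : ∀ j, (Q j.castSucc ++ [a j]).IsChain D.Adj := fun j =>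
    hP.2.left_of_append.infix (List.infix_of_mem_flatten (List.mem_ofFn.2 ⟨j, rfl⟩))
  have hout_chain : ∀ j, (a j :: Q j.succ).IsChain D.Adj := fun j =>
    hP'.2.right_of_append.infix (List.infix_of_mem_flatten (List.mem_ofFn.2 ⟨j, rfl⟩))
  have ha : Injective a := fun i j hij => by
    by_contra hne
    exact Set.disjoint_left.1 (hE hne) List.mem_cons_self (hij ▸ List.mem_cons_self)
  refine h𝒰.wellLinked_range (by simpa using hn) ha hE hF (fun j => ?_) (fun j => ?_)
  · refine ⟨ℬ j.succ, hℬ _, hord _, fun B hB => ?_⟩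
    obtain ⟨u, huQ, huB⟩ := hhit _ B hB
    exact ⟨u, huB, reachIn_of_isChain_cons (hout_chain j) (List.mem_cons_of_mem _ huQ)⟩
  · refine ⟨ℬ j.castSucc, hℬ _, hord _, fun B hB => ?_⟩
    obtain ⟨u, huQ, huB⟩ := hhit _ B hB
    exact ⟨u, huB, (reachIn_of_isChain_concat (hin_chain j) huQ).rev⟩

end AlternatingDecompositions

end Dgraph

theorem gfun_pos {k : ℕ} (hk : 1 ≤ k) : 0 < gfun k :=
  Nat.sub_pos_of_lt (Nat.lt_of_lt_of_le (by omega) (Nat.le_mul_of_pos_right (k + 1) (by omega)))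

theorem half_le_gfun_sub {i k : ℕ} (hik : i ≤ k) : k / 2 ≤ gfun k - i * (k / 2 + 1) := by
  have hmul : i * (k / 2 + 1) ≤ k * (k / 2 + 1) := Nat.mul_le_mul_right _ hik
  have hg : gfun k = k * (k / 2 + 1) + k / 2 := by
    rw [gfun, Nat.succ_mul, ← Nat.add_assoc, Nat.add_sub_cancel]
  omega

theorem IsSplit.subset_union {V : Type} {D : Dgraph V} {T : Set V} {k : ℕ} {P : List V} {i : ℕ}
    {Q : Fin i → List V} {Pi : List V} {ℬ : Fin i → Set (Set V)} {a : Fin i → V} {X : Set V}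
    (h : IsSplit D T k P i Q Pi ℬ a X) : {v | v ∈ P} ⊆ X ∪ {v | v ∈ Pi} := by
  obtain ⟨rfl, -, -, -, -, rfl, -⟩ := h
  intro v hv
  refine (List.mem_append.1 hv).imp_left fun hv => ?_
  obtain ⟨_, hl, hvl⟩ := List.mem_flatten.1 hv
  obtain ⟨j, rfl⟩ := List.mem_ofFn.1 hl
  exact Set.mem_iUnion.2 ⟨j, by simpa [or_comm] using hvl⟩

open Dgraph in
theorem stmt12_general {V : Type} [Finite V] (D : Dgraph V) (k : ℕ) (T : Set V)
    (hT : T.ncard < 2 * gfun k) (P : List V) (hP : D.IsPath P)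
    (hPhit : IsHittingSet (D.TBramble T (gfun k)) {v | v ∈ P}) (i : ℕ) (hik : i ≤ k)
    (Q : Fin i → List V) (Pi : List V) (ℬ : Fin i → Set (Set V)) (a : Fin i → V)
    (X : Set V) (hsplit : IsSplit D T k P i Q Pi ℬ a X) :
    D.WellLinked (Set.range a) := by
  have hlast := hPhit.complementBramble hsplit.subset_union
  obtain ⟨rfl, -, hord, hsub, hhit, -, hXord⟩ := hsplit
  -- The final segment `Pi`, with the complement bramble, plays the part of one more `Q j`.
  refine (isBramble_TBramble T.toFinite hT).wellLinked_range_of_isPath (r := k / 2)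
    (Q := Fin.snoc Q Pi) (ℬ := Fin.snoc ℬ (complementBramble (D.TBramble T (gfun k)) X))
    (by omega) (by simpa using hP) ?_ ?_ ?_
  · exact Fin.lastCases (by simpa using complementBramble_subset) (by simpa using hsub)
  · exact Fin.lastCases (by simpa using (half_le_gfun_sub hik).trans hXord) (by simpa using hord)
  · exact Fin.lastCases (by simpa using hlast) (by simpa using hhit)

open Dgraph in
/-- with `g(k) = (k+1)(⌊k/2⌋+1) - 1`, `T` a `(g(k)-1, g(k)-1)`-linked set
of size `2g(k) - 1` in `D`, and `P` a directed path hitting the `T`-bramble `B_T`, the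
split vertices `a 1, …, a i` of any `(i)`-split of `P` with `1 ≤ i ≤ k` form a
well-linked set in `D`. -/
theorem stmt12 {V : Type} [Finite V] (D : Dgraph V) (k : ℕ) (hk : 1 ≤ k) (T : Set V)
    (hT : T.ncard = 2 * gfun k - 1)
    (hlinked : D.IsLinked T (gfun k - 1) (gfun k - 1))
    (P : List V) (hP : D.IsPath P)
    (hPhit : IsHittingSet (D.TBramble T (gfun k)) {v | v ∈ P})
    (i : ℕ) (hi1 : 1 ≤ i) (hik : i ≤ k)
    (Q : Fin i → List V) (Pi : List V) (ℬ : Fin i → Set (Set V)) (a : Fin i → V)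
    (X : Set V) (hsplit : IsSplit D T k P i Q Pi ℬ a X) :
    D.WellLinked (Set.range a) := by
  have hg := gfun_pos hk
  exact stmt12_general D k T (by omega) P hP hPhit i hik Q Pi ℬ a X hsplit
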